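/- Let Q be a stationary ergodic probability measure on Ω = {1,...,D}^ℤ and let k ≥ 0. Then Q-almost surely lim_{n→∞} (1/n)·(−log B(X_{k+1}^n|X_1^k, k)) = E_Q[−log Q(X_{k+1}|X_1^k)], where Q(X_{k+1}|X_1^k) = Q(X_1^{k+1})/Q(X_1^k) evaluated at the sample path (Q-almost surely well defined). -/

import Mathlib

open Filter MeasureTheory
open scoped Topology

/-- Number of occurrences `c(w|z)` of `w` as a substring of `z`. -/
def cnt {D : ℕ} (w z : List (Fin D)) : ℕ :=
  ((List.range (z.length - w.length + 1)).filter
    (fun i => (z.drop i).take w.length = w)).length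

/-- Count `c(w | z_1^{m-1})` of `w` in the string `z` with its last symbol removed,
with the convention that counting in a block of length `-1` (i.e. when `z` itself is
empty) gives `0`. -/
def cntPred {D : ℕ} (w z : List (Fin D)) : ℕ :=
  if z = [] then 0 else cnt w z.dropLast

/-- The prefix `x_1^n` of the one-sided sequence `x` (0-indexed: `x i = x_{i+1}`). -/
def pref {D : ℕ} (x : ℕ → Fin D) (n : ℕ) : List (Fin D) :=
  (List.range n).map x

/-- Adaptive Markov predictor: the natural-number index corresponds to the Markov
order shifted by one, so `Bpred D xs a (k+1) = B(a | xs, k)` and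
`Bpred D xs a 0 = B(a | xs, -1) = 1/D`, where
`B(x_{n+1}|x_1^n, k) = (c(x_{n+1-k}^{n+1}|x_1^n) + B(x_{n+1}|x_1^n, k-1)) /
(c(x_{n+1-k}^{n}|x_1^{n-1}) + 1)`.  Counts of substrings whose indices fall outside
the string are taken to be zero. -/
noncomputable def Bpred (D : ℕ) (xs : List (Fin D)) (a : Fin D) : ℕ → ℝ
  | 0 => 1 / D
  | k + 1 =>
    if k ≤ xs.length then
      ((cnt (xs.drop (xs.length - k) ++ [a]) xs : ℝ) + Bpred D xs a k) /
      ((cntPred (xs.drop (xs.length - k)) xs : ℝ) + 1)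
    else Bpred D xs a k

/-- The two-sided sequence space `Ω = {1,...,D}^ℤ` with the product σ-algebra. -/
abbrev Omega (D : ℕ) := ℤ → Fin D

/-- The shift `T : Ω → Ω`. -/
def shiftT (D : ℕ) : Omega D → Omega D := fun ω i => ω (i + 1)

/-- The cylinder set `{X_1 = x 0, ..., X_n = x (n-1)}`. -/
def cylSet (D : ℕ) (x : ℕ → Fin D) (n : ℕ) : Set (Omega D) :=
  {ω | ∀ i < n, ω ((i : ℤ) + 1) = x i}

/-- The one-sided sample path `X_1, X_2, ...` of `ω` (0-indexed). -/
def path (D : ℕ) (ω : Omega D) : ℕ → Fin D := fun i => ω ((i : ℤ) + 1)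

/-- The cylinder probability `Q(x_1^n)`. -/
noncomputable def Qstr (D : ℕ) (Q : Measure (Omega D)) (x : ℕ → Fin D) (n : ℕ) : ℝ :=
  (Q (cylSet D x n)).toReal

noncomputable def mxs {Ω : Type*} (T : Ω → Ω) (g : Ω → ℝ) : ℕ → Ω → ℝ
  | 0 => fun _ => 0
  | n + 1 => fun x => max 0 (g x + mxs T g n (T x))

lemma mxs_nonneg {Ω : Type*} (T : Ω → Ω) (g : Ω → ℝ) (n : ℕ) (x : Ω) : 0 ≤ mxs T g n x := by
  cases n <;> simp [mxs]

lemma mxs_succ_le {Ω : Type*} (T : Ω → Ω) (g : Ω → ℝ) (n : ℕ) :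
    ∀ x, mxs T g n x ≤ mxs T g (n + 1) x := by
  induction n with
  | zero => intro x; exact mxs_nonneg T g 1 x
  | succ n ih =>
    intro x
    have := ih (T x)
    simp only [mxs] at this ⊢
    exact max_le_max le_rfl (by linarith)

lemma birk_le_mxs {Ω : Type*} (T : Ω → Ω) (g : Ω → ℝ) (n : ℕ) :
    ∀ x, birkhoffSum T g n x ≤ mxs T g n x := by
  induction n with
  | zero => intro x; simp [mxs]
  | succ n ih =>
    intro x
    rw [birkhoffSum_succ']
    simp only [mxs]
    exact le_max_of_le_right (by linarith [ih (T x)])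

lemma bdd_inv {Ω : Type*} (T : Ω → Ω) (g : Ω → ℝ) (x : Ω) :
    (∃ C, ∀ n, birkhoffSum T g n (T x) ≤ C) ↔ (∃ C, ∀ n, birkhoffSum T g n x ≤ C) := by
  constructor
  · rintro ⟨C, hC⟩
    refine ⟨max 0 (g x + C), fun n => ?_⟩
    cases n with
    | zero => simp
    | succ n => rw [birkhoffSum_succ']; exact le_max_of_le_right (by linarith [hC n])
  · rintro ⟨C, hC⟩
    refine ⟨C - g x, fun n => ?_⟩
    have := hC (n + 1)
    rw [birkhoffSum_succ'] at this
    linarith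

lemma mxs_integrable {Ω : Type*} [MeasurableSpace Ω] {μ : Measure Ω} {T : Ω → Ω}
    (hT : MeasurePreserving T μ μ) {g : Ω → ℝ} (hg : Integrable g μ) (n : ℕ) :
    Integrable (mxs T g n) μ := by
  induction n with
  | zero => exact integrable_zero _ _ _
  | succ n ih =>
    exact (integrable_zero _ _ _).sup (hg.add (hT.integrable_comp_of_integrable ih))

lemma birk_bdd {Ω : Type*} [MeasurableSpace Ω] {μ : Measure Ω} [IsProbabilityMeasure μ] {T : Ω → Ω}
    (hT : Ergodic T μ) {g : Ω → ℝ} (hgm : Measurable g) (hg : Integrable g μ)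
    (hneg : ∫ x, g x ∂μ < 0) :
    ∀ᵐ x ∂μ, ∃ C, ∀ n, birkhoffSum T g n x ≤ C := by
  have hTm : Measurable T := hT.measurable
  have hSm : ∀ n, Measurable (birkhoffSum T g n) := fun n => by
    unfold birkhoffSum
    exact Finset.measurable_sum _ (fun i _ => hgm.comp (hTm.iterate i))
  have hE : MeasurableSet {x | ∃ C, ∀ n, birkhoffSum T g n x ≤ C} := by
    have := measurableSet_bddAbove_range (f := fun n => birkhoffSum T g n) hSm
    convert this using 3
    simp [BddAbove, Set.Nonempty, upperBounds]
  rcases hT.toPreErgodic.prob_eq_zero_or_one hE (by ext x; exact bdd_inv T g x) with h | h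
  swap
  · rwa [← prob_compl_eq_zero_iff hE] at h
  exfalso
  have hae : ∀ᵐ x ∂μ, ¬ ∃ C, ∀ n, birkhoffSum T g n x ≤ C := by
    rw [ae_iff]; simpa using h
  have hmi := fun n => mxs_integrable hT.toMeasurePreserving hg n
  have hmT := fun n => hT.toMeasurePreserving.integrable_comp_of_integrable (hmi n)
  have hlim : Tendsto (fun n => ∫ x, (mxs T g (n + 1) x - mxs T g n (T x)) ∂μ) atTop
      (𝓝 (∫ x, g x ∂μ)) := by
    refine tendsto_integral_of_dominated_convergence (fun x => |g x|) 
      (fun n => ((hmi (n + 1)).sub (hmT n)).aestronglyMeasurable) hg.abs ?_ ?_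
    · intro n
      filter_upwards with x
      have h0 := mxs_nonneg T g n (T x)
      simp only [mxs, Real.norm_eq_abs]
      rw [abs_le]
      have h1 := neg_abs_le (g x)
      have h2 := le_abs_self (g x)
      have h3 := abs_nonneg (g x)
      rcases max_cases 0 (g x + mxs T g n (T x)) with h | h <;> constructor <;> linarith
    · filter_upwards [hae] with x hx
      rw [← bdd_inv] at hx
      push Not at hx
      obtain ⟨N, hN⟩ := hx (- g x)
      refine tendsto_const_nhds.congr' ?_
      filter_upwards [eventually_ge_atTop N] with n hn
      have h1 := birk_le_mxs T g N (T x)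
      have h2 : mxs T g N (T x) ≤ mxs T g n (T x) :=
        monotone_nat_of_le_succ (f := fun n => mxs T g n (T x)) 
          (fun n => mxs_succ_le T g n (T x)) hn
      simp only [mxs]
      rw [max_eq_right (by linarith)]; ring
  have hge : ∀ n, 0 ≤ ∫ x, (mxs T g (n + 1) x - mxs T g n (T x)) ∂μ := by
    intro n
    have hs := integral_sub (hmi (n + 1)) (hmT n)
    simp only [Function.comp_apply] at hs
    rw [hs]
    have : ∫ x, mxs T g n (T x) ∂μ = ∫ x, mxs T g n x ∂μ := by
      have h := integral_map (μ := μ) hTm.aemeasurable (f := mxs T g n)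
        (by rw [hT.toMeasurePreserving.map_eq]; exact (hmi n).aestronglyMeasurable)
      rw [hT.toMeasurePreserving.map_eq] at h
      exact h.symm
    rw [this, sub_nonneg]
    exact integral_mono (hmi n) (hmi (n + 1)) (fun x => mxs_succ_le T g n x)
  exact absurd (ge_of_tendsto' hlim hge) (by linarith)

lemma birk_upper {Ω : Type*} [MeasurableSpace Ω] {μ : Measure Ω} [IsProbabilityMeasure μ]
    {T : Ω → Ω} (hT : Ergodic T μ) {f : Ω → ℝ} (hfm : Measurable f) (hf : Integrable f μ) :
    ∀ᵐ x ∂μ, ∀ m : ℕ, ∀ᶠ n : ℕ in atTop,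
      birkhoffSum T f n x / n ≤ ∫ x, f x ∂μ + 2 * (1 / ((m : ℝ) + 1)) := by
  rw [ae_all_iff]
  intro m
  set e : ℝ := 1 / ((m : ℝ) + 1) with he
  have hepos : 0 < e := by positivity
  set I := ∫ x, f x ∂μ with hI
  have h := birk_bdd hT (g := fun x => f x - (I + e)) (hfm.sub_const _)
    (hf.sub (integrable_const _)) (by
      rw [integral_sub hf (integrable_const _)]; simp [← hI]; exact hepos)
  filter_upwards [h] with x hx
  obtain ⟨C, hC⟩ := hx
  have hl : Tendsto (fun n : ℕ => C / (n : ℝ)) atTop (𝓝 0) :=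
    tendsto_const_div_atTop_nhds_zero_nat C
  filter_upwards [hl.eventually_le_const hepos, eventually_gt_atTop 0] with n hn hn0
  have hn0' : (0 : ℝ) < n := by exact_mod_cast hn0
  have h1 := hC n
  simp only [birkhoffSum, Finset.sum_sub_distrib, Finset.sum_const, Finset.card_range,
    nsmul_eq_mul] at h1
  rw [div_le_iff₀ hn0'] at hn ⊢
  simp only [birkhoffSum]
  nlinarith

theorem birkhoff_ae {Ω : Type*} [MeasurableSpace Ω] {μ : Measure Ω} [IsProbabilityMeasure μ]
    {T : Ω → Ω} (hT : Ergodic T μ) {f : Ω → ℝ} (hfm : Measurable f) (hf : Integrable f μ) :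
    ∀ᵐ x ∂μ, Tendsto (fun n : ℕ => birkhoffSum T f n x / n) atTop (𝓝 (∫ x, f x ∂μ)) := by
  filter_upwards [birk_upper hT hfm hf, birk_upper hT hfm.neg hf.neg] with x h1 h2
  rw [Metric.tendsto_atTop']
  intro ε hε
  obtain ⟨m, hm⟩ := exists_nat_one_div_lt (show 0 < ε / 2 by positivity)
  have h := (h1 m).and (h2 m)
  rw [eventually_atTop] at h
  obtain ⟨N, hN⟩ := h
  refine ⟨N, fun n hn => ?_⟩
  obtain ⟨h3, h4⟩ := hN n hn.le
  have e1 : birkhoffSum T (-f) n x = - birkhoffSum T f n x := by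
    simp [birkhoffSum, Finset.sum_neg_distrib]
  have e2 : ∫ x, (-f) x ∂μ = - ∫ x, f x ∂μ := by simp [integral_neg]
  rw [e1, e2, neg_div] at h4
  rw [Real.dist_eq, abs_lt]
  constructor <;> linarith

lemma pref_length {D : ℕ} (x : ℕ → Fin D) (n : ℕ) : (pref x n).length = n := by simp [pref]

lemma pref_drop_take {D : ℕ} (x : ℕ → Fin D) (n i m : ℕ) (h : i + m ≤ n) :
    ((pref x n).drop i).take m = pref (fun j => x (i + j)) m := by
  apply List.ext_getElem
  · simp [pref]; omega
  · intro j h1 h2; simp [pref]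

lemma pref_drop {D : ℕ} (x : ℕ → Fin D) (j k : ℕ) :
    (pref x (j + k)).drop j = pref (fun i => x (j + i)) k := by
  apply List.ext_getElem
  · simp [pref]
  · intro i h1 h2; simp [pref]

lemma pref_succ {D : ℕ} (x : ℕ → Fin D) (n : ℕ) : pref x (n + 1) = pref x n ++ [x n] := by
  simp [pref, List.range_succ]

lemma cnt_pref {D : ℕ} (w : List (Fin D)) (x : ℕ → Fin D) (n : ℕ) (h : w.length ≤ n) :
    (cnt w (pref x n) : ℝ) = ∑ i ∈ Finset.range (n - w.length + 1),
      if pref (fun j => x (i + j)) w.length = w then (1 : ℝ) else 0 := by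
  rw [Finset.sum_boole, cnt, pref_length]
  congr 1
  rw [← List.toFinset_card_of_nodup (List.nodup_range.filter _)]
  congr 1
  ext i
  simp only [List.mem_toFinset, List.mem_filter, List.mem_range, Finset.mem_filter,
    Finset.mem_range, decide_eq_true_eq]
  refine and_congr_right fun hi => ?_
  rw [pref_drop_take x n i _ (by omega)]

lemma cntPred_pref {D : ℕ} (w : List (Fin D)) (x : ℕ → Fin D) (n : ℕ) :
    cntPred w (pref x (n + 1)) = cnt w (pref x n) := by
  rw [cntPred, if_neg (by simp [pref_succ])]
  simp [pref_succ]

lemma cnt_le_cntPred {D : ℕ} (w z : List (Fin D)) (a : Fin D) :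
    cnt (w ++ [a]) z ≤ cntPred w z := by
  rw [cntPred]
  split_ifs with hz
  · subst hz; simp [cnt]
  · have hz' : 0 < z.length := List.length_pos_iff.mpr hz
    unfold cnt
    rw [← List.toFinset_card_of_nodup (List.nodup_range.filter _),
      ← List.toFinset_card_of_nodup (List.nodup_range.filter _)]
    apply Finset.card_le_card
    intro i
    simp only [List.mem_toFinset, List.mem_filter, List.mem_range, decide_eq_true_eq]
    rintro ⟨h1, h2⟩
    have hl := congrArg List.length h2
    simp at hl h1
    refine ⟨by simp; omega, ?_⟩
    have h3 := congrArg (List.take w.length) h2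
    rw [List.take_take, List.take_left] at h3
    rw [← h3]
    rw [List.dropLast_eq_take]
    apply List.ext_getElem
    · simp; omega
    · intro j _ _; simp

lemma Bpred_bounds {D : ℕ} (hD : 2 ≤ D) (xs : List (Fin D)) (a : Fin D) (k : ℕ) :
    0 < Bpred D xs a k ∧ Bpred D xs a k ≤ 1 := by
  have hD' : (2 : ℝ) ≤ D := by exact_mod_cast hD
  induction k with
  | zero =>
    simp only [Bpred]
    exact ⟨by positivity, by rw [div_le_one (by positivity)]; linarith⟩
  | succ k ih =>
    obtain ⟨h1, h2⟩ := ih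
    simp only [Bpred]
    split_ifs
    · refine ⟨by positivity, ?_⟩
      rw [div_le_one (by positivity)]
      have : (cnt (xs.drop (xs.length - k) ++ [a]) xs : ℝ) ≤
        cntPred (xs.drop (xs.length - k)) xs := by exact_mod_cast cnt_le_cntPred _ _ _
      linarith
    · exact ⟨h1, h2⟩

lemma path_iter (D : ℕ) (ω : Omega D) (i j : ℕ) :
    path D ((shiftT D)^[i] ω) j = path D ω (i + j) := by
  induction i generalizing ω with
  | zero => simp
  | succ i ih =>
    rw [Function.iterate_succ_apply, ih]
    simp only [path, shiftT]
    congr 1; push_cast; ring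

/-- probability of a word -/
noncomputable def pw (D : ℕ) (Q : Measure (Omega D)) (w : List (Fin D)) : ℝ :=
  (Q {ω | pref (path D ω) w.length = w}).toReal

lemma Qstr_eq (D : ℕ) (Q : Measure (Omega D)) (x : ℕ → Fin D) (n : ℕ) :
    Qstr D Q x n = pw D Q (pref x n) := by
  unfold Qstr pw
  congr 2
  ext ω
  simp [cylSet, pref_length, pref, path]

lemma measurable_path (D : ℕ) (n : ℕ) :
    Measurable (fun ω : Omega D => fun i : Fin n => path D ω i) := by
  unfold path
  fun_prop

lemma pref_ofFn {D : ℕ} (x : ℕ → Fin D) (n : ℕ) :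
    pref x n = List.ofFn (fun i : Fin n => x i) := by
  apply List.ext_getElem <;> simp [pref]

lemma measurable_pref_comp (D : ℕ) (n : ℕ) (F : List (Fin D) → ℝ) :
    Measurable (fun ω : Omega D => F (pref (path D ω) n)) := by
  simp_rw [pref_ofFn]
  exact (measurable_of_finite (fun v : Fin n → Fin D => F (List.ofFn v))).comp (measurable_path D n)

lemma integrable_pref_comp (D : ℕ) (Q : Measure (Omega D)) [IsProbabilityMeasure Q]
    (n : ℕ) (F : List (Fin D) → ℝ) :
    Integrable (fun ω : Omega D => F (pref (path D ω) n)) Q := by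
  refine Integrable.of_bound (measurable_pref_comp D n F).aestronglyMeasurable
    (∑ v : Fin n → Fin D, |F (List.ofFn v)|) ?_
  filter_upwards with ω
  rw [pref_ofFn, Real.norm_eq_abs]
  exact Finset.single_le_sum (f := fun v : Fin n → Fin D => |F (List.ofFn v)|)
    (fun _ _ => abs_nonneg _) (Finset.mem_univ _)

lemma freq_ae (D : ℕ) (Q : Measure (Omega D)) [IsProbabilityMeasure Q]
    (hQ : Ergodic (shiftT D) Q) (w : List (Fin D)) :
    ∀ᵐ ω ∂Q, Tendsto (fun n : ℕ => (cnt w (pref (path D ω) n) : ℝ) / n) atTop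
      (𝓝 (pw D Q w)) := by
  have hm : MeasurableSet {ω : Omega D | pref (path D ω) w.length = w} := by
    have := measurable_pref_comp D w.length (fun u => if u = w then 1 else 0)
      (measurableSet_singleton (1 : ℝ))
    convert this using 1
    ext ω; simp
  have h := birkhoff_ae hQ
    (measurable_pref_comp D w.length (fun u => if u = w then 1 else 0))
    (integrable_pref_comp D Q w.length (fun u => if u = w then 1 else 0))
  have hI : ∫ ω, (if pref (path D ω) w.length = w then (1 : ℝ) else 0) ∂Q = pw D Q w := by
    have := integral_indicator_one (μ := Q) hm
    rw [pw, ← Measure.real, ← this]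
    congr 1
    funext ω
    simp [Set.indicator]
  rw [hI] at h
  filter_upwards [h] with ω hω
  have h1 : Tendsto (fun n : ℕ => n - w.length + 1) atTop atTop :=
    (tendsto_add_atTop_nat 1).comp (tendsto_sub_atTop_nat _)
  have h2 := hω.comp h1
  have h3 : Tendsto (fun n : ℕ => ((n - w.length + 1 : ℕ) : ℝ) / n) atTop (𝓝 1) := by
    have : Tendsto (fun n : ℕ => 1 + (1 - (w.length : ℝ)) / n) atTop (𝓝 (1 + 0)) :=
      tendsto_const_nhds.add (tendsto_const_div_atTop_nhds_zero_nat _)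
    rw [add_zero] at this
    refine this.congr' ?_
    filter_upwards [eventually_ge_atTop w.length, eventually_gt_atTop 0] with n hn hn0
    have : (n : ℝ) ≠ 0 := by positivity
    push_cast [Nat.cast_sub hn]
    field_simp
    ring
  have h4 := h2.mul h3
  rw [mul_one] at h4
  refine h4.congr' ?_
  filter_upwards [eventually_ge_atTop w.length] with n hn
  rw [cnt_pref _ _ _ hn]
  have : ((n - w.length + 1 : ℕ) : ℝ) ≠ 0 := by positivity
  simp only [Function.comp, birkhoffSum]
  rw [div_mul_div_cancel₀ this]
  congr 1
  refine Finset.sum_congr rfl fun i _ => ?_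
  simp only [show (path D ((shiftT D)^[i] ω)) = fun j => path D ω (i + j) from
    funext (path_iter D ω i)]

lemma pos_ae (D : ℕ) (Q : Measure (Omega D)) [IsProbabilityMeasure Q]
    (hQ : Ergodic (shiftT D) Q) (m : ℕ) :
    ∀ᵐ ω ∂Q, ∀ j : ℕ, 0 < pw D Q (pref (fun i => path D ω (j + i)) m) := by
  have h0 : ∀ᵐ ω ∂Q, 0 < pw D Q (pref (path D ω) m) := by
    have : ∀ᵐ ω ∂Q, ∀ w : List (Fin D), pw D Q w = 0 → pref (path D ω) w.length ≠ w := by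
      rw [ae_all_iff]
      intro w
      by_cases hw : pw D Q w = 0
      · rw [pw, ENNReal.toReal_eq_zero_iff] at hw
        have h := hw.resolve_right (measure_ne_top _ _)
        rw [ae_iff]
        refine measure_mono_null ?_ h
        intro ω; simp
      · simp [hw]
    filter_upwards [this] with ω hω
    have h1 : 0 ≤ pw D Q (pref (path D ω) m) := ENNReal.toReal_nonneg
    refine lt_of_le_of_ne h1 fun h => ?_
    exact hω _ h.symm (by rw [pref_length])
  rw [ae_all_iff]
  intro j
  have := (hQ.toMeasurePreserving.iterate j).quasiMeasurePreserving.ae h0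
  filter_upwards [this] with ω hω
  rwa [show (path D ((shiftT D)^[j] ω)) = fun i => path D ω (j + i) from
    funext (path_iter D ω j)] at hω

lemma pw_mono (D : ℕ) (Q : Measure (Omega D)) [IsProbabilityMeasure Q] (w : List (Fin D))
    (a : Fin D) : pw D Q (w ++ [a]) ≤ pw D Q w := by
  unfold pw
  refine ENNReal.toReal_mono (measure_ne_top _ _) (measure_mono ?_)
  intro ω h
  simp only [Set.mem_ofPred_eq, List.length_append, List.length_singleton, pref_succ] at h ⊢
  exact (List.append_inj h (by rw [pref_length])).1

lemma log_tendsto {D : ℕ} (hD : 2 ≤ D) (Q : Measure (Omega D)) [IsProbabilityMeasure Q]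
    (x : ℕ → Fin D)
    (hx : ∀ w : List (Fin D), Tendsto (fun n : ℕ => (cnt w (pref x n) : ℝ) / n) atTop
      (𝓝 (pw D Q w))) (k : ℕ) (w : List (Fin D)) (a : Fin D) (hp : 0 < pw D Q (w ++ [a])) :
    Tendsto (fun n : ℕ => Real.log (((cnt (w ++ [a]) (pref x n) : ℝ) + Bpred D (pref x n) a k) /
      ((cntPred w (pref x n) : ℝ) + 1))) atTop
      (𝓝 (Real.log (pw D Q (w ++ [a]) / pw D Q w))) := by
  have hpw : 0 < pw D Q w := hp.trans_le (pw_mono D Q w a)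
  refine Tendsto.log ?_ (by positivity)
  have hinv : Tendsto (fun n : ℕ => 1 / (n : ℝ)) atTop (𝓝 0) :=
    tendsto_const_div_atTop_nhds_zero_nat 1
  have hb : Tendsto (fun n : ℕ => Bpred D (pref x n) a k / (n : ℝ)) atTop (𝓝 0) := by
    refine squeeze_zero (fun n => ?_) (fun n => ?_) hinv
    · exact div_nonneg (Bpred_bounds hD _ _ _).1.le (by positivity)
    · exact div_le_div_of_nonneg_right (Bpred_bounds hD _ _ _).2 (by positivity)
  have h1 := (hx (w ++ [a])).add hb
  have h2 : Tendsto (fun n : ℕ => (cntPred w (pref x n) : ℝ) / n) atTop (𝓝 (pw D Q w)) := by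
    rw [← tendsto_add_atTop_iff_nat 1]
    have h3 := (hx w).mul (tendsto_natCast_div_add_atTop (1 : ℝ))
    rw [mul_one] at h3
    refine h3.congr' ?_
    filter_upwards [eventually_gt_atTop 0] with n hn
    have : (n : ℝ) ≠ 0 := by positivity
    rw [cntPred_pref, div_mul_div_cancel₀ this]
    push_cast; rfl
  have h3 := h2.add hinv
  rw [add_zero] at h1 h3
  have h4 := h1.div h3 hpw.ne'
  refine h4.congr' ?_
  filter_upwards [eventually_gt_atTop 0] with n hn
  have : (n : ℝ) ≠ 0 := by positivity
  simp only [Pi.div_apply]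
  rw [← add_div, ← add_div, div_div_div_cancel_right₀ this]

lemma Bpred_term {D : ℕ} (x : ℕ → Fin D) (j k : ℕ) :
    Bpred D (pref x (j + k)) (x (j + k)) (k + 1) =
      ((cnt (pref (fun i => x (j + i)) k ++ [x (j + k)]) (pref x (j + k)) : ℝ) +
        Bpred D (pref x (j + k)) (x (j + k)) k) /
      ((cntPred (pref (fun i => x (j + i)) k) (pref x (j + k)) : ℝ) + 1) := by
  rw [Bpred, if_pos (by rw [pref_length]; omega), pref_length, Nat.add_sub_cancel, pref_drop]

lemma core {D : ℕ} (hD : 2 ≤ D) (Q : Measure (Omega D)) [IsProbabilityMeasure Q]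
    (x : ℕ → Fin D) (k : ℕ) (I : ℝ)
    (hx : ∀ w : List (Fin D), Tendsto (fun n : ℕ => (cnt w (pref x n) : ℝ) / n) atTop
      (𝓝 (pw D Q w)))
    (hpos : ∀ j : ℕ, 0 < pw D Q (pref (fun i => x (j + i)) (k + 1)))
    (hI : Tendsto (fun n : ℕ => (∑ j ∈ Finset.range n,
      -Real.log (pw D Q (pref (fun i => x (j + i)) (k + 1)) /
        pw D Q (pref (fun i => x (j + i)) k))) / (n : ℝ)) atTop (𝓝 I)) :
    Tendsto (fun n : ℕ =>
          -Real.log (∏ i ∈ Finset.Icc (k + 1) n,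
            Bpred D (pref x (i - 1)) (x (i - 1)) (k + 1)) / n) atTop (𝓝 I) := by
  set b : ℕ → ℝ := fun j => -Real.log (Bpred D (pref x (j + k)) (x (j + k)) (k + 1)) with hb
  set q : ℕ → ℝ := fun j => -Real.log (pw D Q (pref (fun i => x (j + i)) (k + 1)) /
        pw D Q (pref (fun i => x (j + i)) k)) with hq
  let G : (Fin k → Fin D) × Fin D → ℕ → ℝ := fun v n =>
    |Real.log (((cnt (List.ofFn v.1 ++ [v.2]) (pref x n) : ℝ) + Bpred D (pref x n) v.2 k) /
      ((cntPred (List.ofFn v.1) (pref x n) : ℝ) + 1)) -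
      Real.log (pw D Q (List.ofFn v.1 ++ [v.2]) / pw D Q (List.ofFn v.1))|
  let E : (Fin k → Fin D) × Fin D → ℕ → ℝ := fun v n =>
    if 0 < pw D Q (List.ofFn v.1 ++ [v.2]) then G v n else 0
  have hE : ∀ v, Tendsto (E v) atTop (𝓝 0) := by
    intro v
    by_cases hv : 0 < pw D Q (List.ofFn v.1 ++ [v.2])
    · simp only [E, if_pos hv, G]
      have := ((log_tendsto hD Q x hx k _ _ hv).sub_const
        (Real.log (pw D Q (List.ofFn v.1 ++ [v.2]) / pw D Q (List.ofFn v.1)))).abs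
      simpa using this
    · simp only [E, if_neg hv]; exact tendsto_const_nhds
  have hE0 : ∀ v n, 0 ≤ E v n := by
    intro v n
    simp only [E, G]
    split_ifs
    · exact abs_nonneg _
    · exact le_rfl
  have hEs : Tendsto (fun n => ∑ v, E v n) atTop (𝓝 0) := by
    have := tendsto_finset_sum (Finset.univ) (fun v _ => hE v)
    simpa using this
  have hd : Tendsto (fun j => b j - q j) atTop (𝓝 0) := by
    refine squeeze_zero_norm (fun j => ?_) (hEs.comp (tendsto_add_atTop_nat k))
    have h1 : |b j - q j| = E (fun i => x (j + i), x (j + k)) (j + k) := by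
      simp only [E, G]
      rw [← pref_ofFn (fun i => x (j + i)) k]
      have hp := hpos j
      simp only [hb, hq]
      rw [pref_succ] at hp ⊢
      rw [if_pos hp, Bpred_term, abs_sub_comm]
      congr 1; ring
    rw [Real.norm_eq_abs, h1]
    exact Finset.single_le_sum (f := fun v => E v (j + k)) (fun v _ => hE0 v _)
      (Finset.mem_univ _)
  have hs : Tendsto (fun n : ℕ => (∑ j ∈ Finset.range n, b j) / (n : ℝ)) atTop (𝓝 I) := by
    have := hd.cesaro.add hI
    rw [zero_add] at this
    refine this.congr fun n => ?_
    rw [Finset.sum_sub_distrib]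
    ring
  have hs2 := hs.comp (tendsto_sub_atTop_nat k)
  have h3 : Tendsto (fun n : ℕ => ((n - k : ℕ) : ℝ) / n) atTop (𝓝 1) := by
    have : Tendsto (fun n : ℕ => 1 - (k : ℝ) / n) atTop (𝓝 (1 - 0)) :=
      tendsto_const_nhds.sub (tendsto_const_div_atTop_nhds_zero_nat _)
    rw [sub_zero] at this
    refine this.congr' ?_
    filter_upwards [eventually_ge_atTop k, eventually_gt_atTop 0] with n hn hn0
    have : (n : ℝ) ≠ 0 := by positivity
    rw [Nat.cast_sub hn]
    field_simp
  have h4 := hs2.mul h3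
  rw [mul_one] at h4
  refine h4.congr' ?_
  filter_upwards [eventually_gt_atTop k] with n hn
  have h5 : ((n - k : ℕ) : ℝ) ≠ 0 := by
    have : 0 < n - k := by omega
    positivity
  simp only [Function.comp]
  rw [div_mul_div_cancel₀ h5, Real.log_prod (fun i _ => (Bpred_bounds hD _ _ _).1.ne'),
    ← Finset.sum_neg_distrib]
  congr 1
  rw [← Finset.Ico_add_one_right_eq_Icc, Finset.sum_Ico_eq_sum_range]
  rw [show n + 1 - (k + 1) = n - k by omega]
  refine Finset.sum_congr rfl fun j _ => ?_
  rw [show k + 1 + j - 1 = j + k by omega]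

/-- Let `Q` be a stationary ergodic probability measure on `Ω = {1,...,D}^ℤ` and
`k ≥ 0`. Then `Q`-almost surely
`lim_{n→∞} (1/n)·(−log B(X_{k+1}^n|X_1^k, k)) = E_Q[−log Q(X_{k+1}|X_1^k)]`, where
`B(x_{k+1}^n|x_1^k, k) = ∏_{i=k+1}^n B(x_i|x_1^{i-1}, k)` and
`Q(X_{k+1}|X_1^k) = Q(X_1^{k+1})/Q(X_1^k)` evaluated at the sample path. -/
theorem markov_predictor_entropy_limit
    (D : ℕ) (hD : 2 ≤ D)
    (Q : Measure (Omega D)) [IsProbabilityMeasure Q]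
    (hQerg : Ergodic (shiftT D) Q) (k : ℕ) :
    ∀ᵐ ω ∂Q,
      Tendsto (fun n : ℕ =>
          -Real.log (∏ i ∈ Finset.Icc (k + 1) n,
            Bpred D (pref (path D ω) (i - 1)) (path D ω (i - 1)) (k + 1)) / n)
        atTop
        (𝓝 (∫ ω', -Real.log
          (Qstr D Q (path D ω') (k + 1) / Qstr D Q (path D ω') k) ∂Q)) := by
  have h1 : ∀ᵐ ω ∂Q, ∀ w : List (Fin D),
      Tendsto (fun n : ℕ => (cnt w (pref (path D ω) n) : ℝ) / n) atTop (𝓝 (pw D Q w)) := by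
    rw [ae_all_iff]; exact freq_ae D Q hQerg
  have h2 := birkhoff_ae hQerg
    (measurable_pref_comp D (k + 1) (fun u => -Real.log (pw D Q u / pw D Q (u.take k))))
    (integrable_pref_comp D Q (k + 1) (fun u => -Real.log (pw D Q u / pw D Q (u.take k))))
  have ht : ∀ x : ℕ → Fin D, (pref x (k + 1)).take k = pref x k := by
    intro x
    rw [pref_succ, List.take_left' (pref_length x k)]
  simp only [ht] at h2
  simp only [Qstr_eq]
  filter_upwards [h1, h2, pos_ae D Q hQerg (k + 1)] with ω h1 h2 h3
  refine core hD Q (path D ω) k _ h1 h3 ?_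
  refine h2.congr fun n => ?_
  simp only [birkhoffSum]
  congr 1
  refine Finset.sum_congr rfl fun j _ => ?_
  simp only [show (path D ((shiftT D)^[j] ω)) = fun i => path D ω (j + i) from
    funext (path_iter D ω j)]
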